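/- Let p be a prime, R a nontrivial commutative ring and q ∈ R with (p)_q = 0 and R q-divisible. Let A = R[x], σ(x) = qx, ∂_σ(x^n) = (n)_q x^{n−1}. Let H be a module over the subring R[x^p] of R[x], u : H → H an R[x^p]-linear endomorphism with u^n(h) = 0 for each h and some n = n(h), let M = R[x] ⊗_{R[x^p]} H and let ∂_M be the unique σ-derivation on M with ∂_M(1⊗h) = x^{p−1}⊗u(h). Then the map h ↦ 1⊗h induces an isomorphism of R[x^p]-modules from ker(u) onto ker(∂_M), and the map h ↦ (class of x^{p−1}⊗h) induces an isomorphism of R[x^p]-modules from coker(u) onto coker(∂_M). (Comparison of the cohomology of the q-de Rham complex of (M, ∂_M) with that of the Higgs complex of (H, u).) -/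

import Mathlib

/-!
The powers `1, x, …, x^{p-1}` form a basis of `R[x]` over `R[x^p]`, so `M` is the direct sum of
the `x^j ⊗ H` with `j < p`. In these coordinates `∂_M` is a cyclic shift: it maps `1 ⊗ H` to
`x^{p-1} ⊗ H` through `u`, and `x^j ⊗ H` to `x^{j-1} ⊗ H` through `(j)_q + q^j x^p u` for
`0 < j < p`. As `j` is invertible modulo `p`, say `j k = 1 + p l`, the relation `(p)_q = 0` gives
`(j k)_q = 1`, and `(j)_q`, which divides `(j k)_q`, is a unit. Since `u` is locally nilpotent,
`(j)_q + q^j x^p u` is then bijective, and the only entry of the shift which contributes to the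
kernel and the cokernel is `u`.
-/

open scoped TensorProduct

/-- The `q`-integer `(n)_q = 1 + q + ⋯ + q^{n-1}`. -/
def qInt {S : Type*} [CommRing S] (q : S) (n : ℕ) : S :=
  ∑ i ∈ Finset.range n, q ^ i

section QInt

variable {S : Type*} [CommRing S] {q : S}

lemma qInt_one : qInt q 1 = 1 := by
  simp [qInt]

lemma qInt_add (m n : ℕ) : qInt q (m + n) = qInt q m + q ^ m * qInt q n := by
  simp only [qInt, Finset.sum_range_add, Finset.mul_sum, pow_add]

lemma qInt_dvd_qInt_mul (m k : ℕ) : qInt q m ∣ qInt q (m * k) := by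
  induction k with
  | zero => simp [qInt]
  | succ k ih =>
    rw [Nat.mul_succ, qInt_add]
    exact dvd_add ih (dvd_mul_left _ _)

lemma isUnit_qInt_of_coprime {p j : ℕ} (hp : 1 < p) (hpq : qInt q p = 0) (hjp : j.Coprime p) :
    IsUnit (qInt q j) := by
  obtain ⟨k, -, hk⟩ := Nat.exists_mul_mod_eq_one_of_coprime hjp hp
  have hpl : qInt q (p * (j * k / p)) = 0 := zero_dvd_iff.mp (hpq ▸ qInt_dvd_qInt_mul p _)
  have hjk : qInt q (j * k) = 1 := by
    rw [← Nat.mod_add_div (j * k) p, hk, qInt_add, qInt_one, hpl, mul_zero, add_zero]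
  exact isUnit_of_dvd_one (hjk ▸ qInt_dvd_qInt_mul j k)

end QInt

section LocallyNilpotent

variable {S H : Type*} [Ring S] [AddCommGroup H] [Module S H]

lemma bijective_sub_of_commute_of_locally_nilpotent {f v : Module.End S H} (hf : IsUnit f)
    (hfv : Commute f v) (hv : ∀ h, ∃ n, (v ^ n) h = 0) : Function.Bijective (f - v) := by
  have hf_pow (n : ℕ) : Function.Bijective (f ^ n) := (Module.End.isUnit_iff _).mp (hf.pow n)
  -- Factor `f ^ n - v ^ n` by `f - v` on either side, with `n` such that `v ^ n` kills `h`.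
  refine ⟨(injective_iff_map_eq_zero _).mpr fun h hh => ?_, fun h => ?_⟩ <;>
    obtain ⟨n, hn⟩ := hv h
  · have hfactor := LinearMap.congr_fun (hfv.geom_sum₂_mul n) h
    rw [Module.End.mul_apply, hh, map_zero, LinearMap.sub_apply, hn, sub_zero] at hfactor
    exact (map_eq_zero_iff _ (hf_pow n).1).mp hfactor.symm
  · obtain ⟨k, rfl⟩ := (hf_pow n).2 h
    have hk : (v ^ n) k = 0 := by
      refine (map_eq_zero_iff _ (hf_pow n).1).mp ?_
      rw [← hn, ← Module.End.mul_apply, ← Module.End.mul_apply, (hfv.pow_pow n n).eq]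
    obtain ⟨g, hg⟩ := hfv.sub_dvd_pow_sub_pow n
    exact ⟨g k, by rw [← Module.End.mul_apply, ← hg, LinearMap.sub_apply, hk, sub_zero]⟩

end LocallyNilpotent

section CyclicShift

variable {S H : Type*} [Semiring S] [AddCommMonoid H] [Module S H] {n : ℕ}
  {φ : Fin n → Module.End S H} {u : Module.End S H}

/-- The endomorphism of `H^{n+1}` which maps the component of index `0` to the one of index `n`
through `u`, and the component of index `i + 1` to the one of index `i` through `φ i`. -/
def cyclicShift (φ : Fin n → Module.End S H) (u : Module.End S H) (h : Fin (n + 1) → H) :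
    Fin (n + 1) → H :=
  Fin.snoc (α := fun _ => H) (fun i => φ i (h i.succ)) (u (h 0))

@[simp]
lemma cyclicShift_castSucc (h : Fin (n + 1) → H) (i : Fin n) :
    cyclicShift φ u h i.castSucc = φ i (h i.succ) :=
  Fin.snoc_castSucc (α := fun _ => H) _ _ i

@[simp]
lemma cyclicShift_last (h : Fin (n + 1) → H) : cyclicShift φ u h (Fin.last n) = u (h 0) :=
  Fin.snoc_last (α := fun _ => H) _ _

lemma exists_single_zero_of_cyclicShift_eq_zero (hφ : ∀ i, Function.Injective (φ i))
    {h : Fin (n + 1) → H} (hh : cyclicShift φ u h = 0) : ∃ h₀, u h₀ = 0 ∧ Pi.single 0 h₀ = h := by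
  refine ⟨h 0, by simpa using congrFun hh (Fin.last n), funext fun j => ?_⟩
  induction j using Fin.cases with
  | zero => simp
  | succ i =>
    have hi : φ i (h i.succ) = 0 := by simpa using congrFun hh i.castSucc
    simpa using ((map_eq_zero_iff _ (hφ i)).mp hi).symm

lemma exists_apply_eq_of_cyclicShift_eq_single_last {h : H} {g : Fin (n + 1) → H}
    (hg : Pi.single (Fin.last n) h = cyclicShift φ u g) : ∃ h', h = u h' :=
  ⟨g 0, by simpa using congrFun hg (Fin.last n)⟩

lemma exists_eq_single_last_add_cyclicShift (hφ : ∀ i, Function.Surjective (φ i))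
    (k : Fin (n + 1) → H) : ∃ h g, k = Pi.single (Fin.last n) h + cyclicShift φ u g := by
  choose g hg using fun i => hφ i (k i.castSucc)
  refine ⟨k (Fin.last n), Fin.cons 0 g, funext fun j => ?_⟩
  induction j using Fin.lastCases with
  | last => simp
  | cast i => simp [hg]

end CyclicShift

section TensorCoords

variable {S A H ι : Type*} [CommSemiring S] [AddCommMonoid A] [Module S A] [AddCommMonoid H]
  [Module S H] [Fintype ι] [DecidableEq ι] (b : Module.Basis ι S A)

/-- The decomposition of `A ⊗ H` as the direct sum of the `b i ⊗ H`, for a finite basis `b` of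
`A`. -/
noncomputable def tensorCoords : (ι → H) ≃ₗ[S] A ⊗[S] H :=
  (Finsupp.linearEquivFunOnFinite S H ι).symm ≪≫ₗ (TensorProduct.equivFinsuppOfBasisLeft b).symm

lemma tensorCoords_apply (h : ι → H) : tensorCoords b h = ∑ i, b i ⊗ₜ h i := by
  simp [tensorCoords, Finsupp.sum_fintype]

lemma tensorCoords_single (i : ι) (h : H) : tensorCoords b (Pi.single i h) = b i ⊗ₜ h := by
  rw [tensorCoords_apply, Finset.sum_eq_single_of_mem i (Finset.mem_univ i), Pi.single_eq_same]
  intro j _ hji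
  rw [Pi.single_eq_of_ne hji, TensorProduct.tmul_zero]

end TensorCoords

section PowerBasis

open Polynomial

variable {R : Type*} [CommRing R] {p : ℕ}

/-- The subring `R[x^p]` of `R[x]`. -/
noncomputable abbrev powSubalgebra (R : Type*) [CommRing R] (p : ℕ) : Subalgebra R R[X] :=
  Algebra.adjoin R {(X : R[X]) ^ p}

/-- The element `x^p` of `R[x^p]`. -/
noncomputable def powSubalgebra.gen (R : Type*) [CommRing R] (p : ℕ) : powSubalgebra R p :=
  ⟨X ^ p, Algebra.self_mem_adjoin_singleton R _⟩

lemma exists_expand_eq_coe (s : powSubalgebra R p) : ∃ g, expand R p g = s := by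
  have hs : (s : R[X]) ∈ (aeval (R := R) ((X : R[X]) ^ p)).range :=
    Algebra.adjoin_singleton_eq_range_aeval R ((X : R[X]) ^ p) ▸ s.2
  exact hs

lemma coeff_expand_mul_X_pow (g : R[X]) (m : ℕ) (i j : Fin p) :
    (expand R p g * X ^ (i : ℕ)).coeff (m * p + j) = if i = j then g.coeff m else 0 := by
  have hp : 0 < p := i.pos
  split_ifs with hij
  · rw [hij, coeff_mul_X_pow, coeff_expand_mul hp]
  · rw [coeff_mul_X_pow', coeff_expand hp, ite_eq_right_iff]
    refine fun hle => if_neg fun hdvd => hij (Fin.ext ?_)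
    have hmod : (i : ℕ) ≡ m * p + j [MOD p] := (Nat.modEq_iff_dvd' hle).mpr hdvd
    simpa [Nat.ModEq, Nat.mod_eq_of_lt] using hmod

lemma linearIndependent_X_pow :
    LinearIndependent (powSubalgebra R p) fun i : Fin p => (X : R[X]) ^ (i : ℕ) := by
  refine Fintype.linearIndependent_iff.mpr fun s hs j => ?_
  choose g hg using fun i => exists_expand_eq_coe (s i)
  have hgj : g j = 0 := by
    ext m
    simpa [Algebra.smul_def, ← hg, finsetSum_coeff, coeff_expand_mul_X_pow] using
      congrArg (fun f : R[X] => f.coeff (m * p + j)) hs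
  exact Subtype.ext (by simp [← hg, hgj])

lemma top_le_span_X_pow (hp : 0 < p) :
    ⊤ ≤ Submodule.span (powSubalgebra R p) (Set.range fun i : Fin p => (X : R[X]) ^ (i : ℕ)) := by
  rintro f -
  induction f using Polynomial.induction_on' with
  | add f g hf hg => exact add_mem hf hg
  | monomial n a =>
    have hdiv : monomial n a =
        (algebraMap R (powSubalgebra R p) a * powSubalgebra.gen R p ^ (n / p)) •
          (X : R[X]) ^ (n % p) := by
      rw [← C_mul_X_pow_eq_monomial, Subalgebra.smul_def, smul_eq_mul]
      conv_lhs => rw [← Nat.div_add_mod n p, pow_add, pow_mul, ← mul_assoc]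
      simp [powSubalgebra.gen]
    exact hdiv ▸ Submodule.smul_mem _ _ (Submodule.subset_span ⟨⟨n % p, Nat.mod_lt n hp⟩, rfl⟩)

/-- The basis `1, x, …, x^{p-1}` of `R[x]` over `R[x^p]`. -/
noncomputable def powBasis (R : Type*) [CommRing R] (hp : 0 < p) :
    Module.Basis (Fin p) (powSubalgebra R p) R[X] :=
  .mk linearIndependent_X_pow (top_le_span_X_pow hp)

@[simp]
lemma powBasis_apply (hp : 0 < p) (i : Fin p) : powBasis R hp i = X ^ (i : ℕ) := by
  simp [powBasis]

end PowerBasis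

section SigmaDerivation

open Polynomial

variable {R : Type*} [CommRing R] {q : R} {n : ℕ} {H : Type*} [AddCommGroup H]

/-- The endomorphism `(j)_q + q^j x^p u` of `H`, through which `∂_M` maps `x^j ⊗ H` to
`x^{j-1} ⊗ H`. -/
noncomputable def qHiggsEntry {p : ℕ} [Module (powSubalgebra R p) H] (q : R)
    (u : Module.End (powSubalgebra R p) H) (j : ℕ) : Module.End (powSubalgebra R p) H :=
  algebraMap R (powSubalgebra R p) (qInt q j) • 1 +
    (algebraMap R (powSubalgebra R p) (q ^ j) * powSubalgebra.gen R p) • u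

lemma bijective_qHiggsEntry {p : ℕ} [Module (powSubalgebra R p) H]
    {u : Module.End (powSubalgebra R p) H} (hu : ∀ h, ∃ n : ℕ, u^[n] h = 0) {j : ℕ}
    (hj : IsUnit (qInt q j)) : Function.Bijective (qHiggsEntry q u j) := by
  let a := algebraMap R (powSubalgebra R p) (qInt q j)
  let c := -(algebraMap R (powSubalgebra R p) (q ^ j) * powSubalgebra.gen R p)
  have hentry : qHiggsEntry q u j = a • 1 - c • u := by
    rw [qHiggsEntry, neg_smul, sub_neg_eq_add]
  have ha : IsUnit (a • (1 : Module.End (powSubalgebra R p) H)) :=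
    Algebra.algebraMap_eq_smul_one (A := Module.End (powSubalgebra R p) H) a ▸
      (hj.map (algebraMap R (powSubalgebra R p))).map (algebraMap _ _)
  rw [hentry]
  refine bijective_sub_of_commute_of_locally_nilpotent ha
    ((Commute.one_left _).smul_left a) fun h => ?_
  obtain ⟨n, hn⟩ := hu h
  exact ⟨n, by rw [_root_.smul_pow, LinearMap.smul_apply, Module.End.pow_apply, hn, smul_zero]⟩

variable [Module (powSubalgebra R (n + 1)) H] {σ : R[X] →ₐ[R] R[X]} {D : R[X] →ₗ[R] R[X]}
  {u : H →ₗ[powSubalgebra R (n + 1)] H}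
  {dM : (R[X] ⊗[powSubalgebra R (n + 1)] H) →+ (R[X] ⊗[powSubalgebra R (n + 1)] H)}

lemma sigmaDerivation_X_pow_succ_tmul (hσ : σ X = C q * X)
    (hD : ∀ k : ℕ, D (X ^ k) = qInt q k • X ^ (k - 1))
    (hleib : ∀ (a : R[X]) (m : R[X] ⊗[powSubalgebra R (n + 1)] H),
      dM (a • m) = D a • m + σ a • dM m)
    (hdM : ∀ h : H, dM (1 ⊗ₜ h) = (X ^ n) ⊗ₜ u h) (j : ℕ) (h : H) :
    dM ((X ^ (j + 1)) ⊗ₜ h) = (X ^ j) ⊗ₜ qHiggsEntry q u (j + 1) h := by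
  have hX : (X : R[X]) ^ (j + 1) * X ^ n = X ^ (n + 1) * X ^ j := by ring
  calc dM ((X ^ (j + 1)) ⊗ₜ h) = dM ((X ^ (j + 1) : R[X]) • 1 ⊗ₜ h) := by
        rw [TensorProduct.smul_tmul', smul_eq_mul, mul_one]
    _ = (C (qInt q (j + 1)) * X ^ j) ⊗ₜ h + (C (q ^ (j + 1)) * X ^ (n + 1) * X ^ j) ⊗ₜ u h := by
        rw [hleib, hD, hdM, map_pow, hσ, TensorProduct.smul_tmul', TensorProduct.smul_tmul',
          smul_eq_mul, smul_eq_mul, mul_one, mul_pow, mul_assoc, hX, ← mul_assoc, C_pow,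
          smul_eq_C_mul, Nat.add_sub_cancel]
    _ = (X ^ j) ⊗ₜ qHiggsEntry q u (j + 1) h := by
        simp [qHiggsEntry, TensorProduct.tmul_add, TensorProduct.smul_tmul', Subalgebra.smul_def,
          powSubalgebra.gen, smul_eq_C_mul]

lemma sigmaDerivation_tensorCoords (hσ : σ X = C q * X)
    (hD : ∀ k : ℕ, D (X ^ k) = qInt q k • X ^ (k - 1))
    (hleib : ∀ (a : R[X]) (m : R[X] ⊗[powSubalgebra R (n + 1)] H),
      dM (a • m) = D a • m + σ a • dM m)
    (hdM : ∀ h : H, dM (1 ⊗ₜ h) = (X ^ n) ⊗ₜ u h) (h : Fin (n + 1) → H) :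
    dM (tensorCoords (powBasis R n.succ_pos) h) =
      tensorCoords (powBasis R n.succ_pos)
        (cyclicShift (fun i => qHiggsEntry q u (i + 1)) u h) := by
  rw [tensorCoords_apply, tensorCoords_apply, map_sum, Fin.sum_univ_succ, Fin.sum_univ_castSucc]
  simp [hdM, sigmaDerivation_X_pow_succ_tmul hσ hD hleib hdM, add_comm]

end SigmaDerivation

open Polynomial in
theorem q_deRham_Higgs_cohomology_comparison_general
    (p : ℕ) (hp : 0 < p) (R : Type*) [CommRing R] (q : R)
    (hunit : ∀ j, 0 < j → j < p → IsUnit (qInt q j))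
    (σ : R[X] →ₐ[R] R[X]) (hσ : σ X = C q * X)
    (D : R[X] →ₗ[R] R[X]) (hD : ∀ n : ℕ, D (X ^ n) = qInt q n • X ^ (n - 1))
    (H : Type*) [AddCommGroup H] [Module (powSubalgebra R p) H]
    (u : H →ₗ[powSubalgebra R p] H) (hu : ∀ h : H, ∃ n : ℕ, u^[n] h = 0)
    (dM : (R[X] ⊗[powSubalgebra R p] H) →+ (R[X] ⊗[powSubalgebra R p] H))
    (hleib : ∀ (a : R[X]) (m : R[X] ⊗[powSubalgebra R p] H), dM (a • m) = D a • m + σ a • dM m)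
    (hdM : ∀ h : H, dM (1 ⊗ₜ h) = (X ^ (p - 1)) ⊗ₜ u h) :
    (∀ (s : powSubalgebra R p) (h : H),
      (1 : R[X]) ⊗ₜ[powSubalgebra R p] (s • h) = (s : R[X]) • (1 ⊗ₜ h)) ∧
    (∀ h : H, u h = 0 → dM (1 ⊗ₜ h) = 0) ∧
    (∀ h : H, u h = 0 → (1 : R[X]) ⊗ₜ[powSubalgebra R p] h = 0 → h = 0) ∧
    (∀ m, dM m = 0 → ∃ h : H, u h = 0 ∧ 1 ⊗ₜ h = m) ∧
    (∀ h : H, (∃ m, (X ^ (p - 1)) ⊗ₜ h = dM m) ↔ ∃ h' : H, h = u h') ∧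
    (∀ m, ∃ h : H, ∃ m', m = (X ^ (p - 1)) ⊗ₜ h + dM m') := by
  obtain ⟨n, rfl⟩ := Nat.exists_eq_add_one.mpr hp
  let e := tensorCoords (H := H) (powBasis R hp)
  have hshift : ∀ h, dM (e h) = e (cyclicShift (fun i => qHiggsEntry q u (i + 1)) u h) :=
    sigmaDerivation_tensorCoords hσ hD hleib hdM
  have hbij (i : Fin n) : Function.Bijective (qHiggsEntry q u (i + 1)) :=
    bijective_qHiggsEntry hu (hunit _ i.val.succ_pos (Nat.succ_lt_succ i.is_lt))
  have hzero (h : H) : e (Pi.single 0 h) = 1 ⊗ₜ h := by simp [e, tensorCoords_single]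
  have hlast (h : H) : e (Pi.single (Fin.last n) h) = (X ^ n) ⊗ₜ h := by
    simp [e, tensorCoords_single]
  refine ⟨fun s => TensorProduct.tmul_smul s 1, fun h hh => by simp [hdM, hh],
    fun h _ hh => ?_, fun m hm => ?_, fun h => ⟨?_, ?_⟩, fun m => ?_⟩
  · simpa [← hzero] using hh
  · obtain ⟨k, rfl⟩ := e.surjective m
    rw [hshift, map_eq_zero_iff e e.injective] at hm
    obtain ⟨h, hh, rfl⟩ := exists_single_zero_of_cyclicShift_eq_zero (fun i => (hbij i).1) hm
    exact ⟨h, hh, (hzero h).symm⟩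
  · rintro ⟨m, hm⟩
    obtain ⟨g, rfl⟩ := e.surjective m
    rw [Nat.add_sub_cancel, hshift, ← hlast] at hm
    exact exists_apply_eq_of_cyclicShift_eq_single_last (e.injective hm)
  · rintro ⟨h', rfl⟩
    exact ⟨1 ⊗ₜ h', (hdM h').symm⟩
  · obtain ⟨k, rfl⟩ := e.surjective m
    obtain ⟨h, g, hk⟩ := exists_eq_single_last_add_cyclicShift (fun i => (hbij i).2) k
    exact ⟨h, e g, by rw [hk, map_add, hlast, hshift, Nat.add_sub_cancel]⟩

/-- comparison of the cohomology of the `q`-de Rham complex with that of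
the Higgs complex: let `p` be a prime, `R` a nontrivial commutative ring, `q ∈ R` with
`(p)_q = 0` and `R` `q`-divisible; `A = R[x]`, `σ(x) = qx`, `∂_σ(x^n) = (n)_q x^{n−1}`.
Let `H` be an `R[x^p]`-module, `u : H → H` an `R[x^p]`-linear endomorphism with every `h`
killed by a power of `u`, `M = R[x] ⊗_{R[x^p]} H`, and `∂_M` the unique `σ`-derivation on
`M` with `∂_M(1⊗h) = x^{p−1}⊗u(h)`.  Then `h ↦ 1⊗h` induces an isomorphism of
`R[x^p]`-modules `ker(u) ≅ ker(∂_M)` and `h ↦ (class of x^{p−1}⊗h)` induces an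
isomorphism of `R[x^p]`-modules `coker(u) ≅ coker(∂_M)` (all stated elementwise below). -/
theorem q_deRham_Higgs_cohomology_comparison
    (p : ℕ) (hp : p.Prime)
    (R : Type*) [CommRing R] [Nontrivial R] (q : R)
    (hpq : qInt q p = 0)
    (hdiv : ∀ m : ℕ, 1 ≤ m → qInt q m ≠ 0 → IsUnit (qInt q m))
    (σ : Polynomial R →ₐ[R] Polynomial R)
    (hσ : σ Polynomial.X = Polynomial.C q * Polynomial.X)
    (D : Polynomial R →ₗ[R] Polynomial R)
    (hD : ∀ n : ℕ, D (Polynomial.X ^ n) = qInt q n • Polynomial.X ^ (n - 1))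
    (H : Type*) [AddCommGroup H]
    [Module (Algebra.adjoin R {(Polynomial.X : Polynomial R) ^ p}) H]
    (u : H →ₗ[Algebra.adjoin R {(Polynomial.X : Polynomial R) ^ p}] H)
    (hu : ∀ h : H, ∃ n : ℕ, (⇑u)^[n] h = 0)
    (dM : (Polynomial R ⊗[Algebra.adjoin R {(Polynomial.X : Polynomial R) ^ p}] H) →+
      (Polynomial R ⊗[Algebra.adjoin R {(Polynomial.X : Polynomial R) ^ p}] H))
    (hleib : ∀ (a : Polynomial R)
        (m : Polynomial R ⊗[Algebra.adjoin R {(Polynomial.X : Polynomial R) ^ p}] H),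
      dM (a • m) = D a • m + σ a • dM m)
    (hdM : ∀ h : H, dM ((1 : Polynomial R) ⊗ₜ h) = (Polynomial.X ^ (p - 1)) ⊗ₜ u h) :
    -- the map `h ↦ 1⊗h` is `R[x^p]`-linear …
    (∀ (s : Algebra.adjoin R {(Polynomial.X : Polynomial R) ^ p}) (h : H),
      (1 : Polynomial R) ⊗ₜ[Algebra.adjoin R {(Polynomial.X : Polynomial R) ^ p}] (s • h) =
        (s : Polynomial R) • ((1 : Polynomial R) ⊗ₜ h)) ∧
    -- … maps `ker u` into `ker ∂_M` …
    (∀ h : H, u h = 0 → dM ((1 : Polynomial R) ⊗ₜ h) = 0) ∧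
    -- … injectively …
    (∀ h : H, u h = 0 → (1 : Polynomial R) ⊗ₜ[Algebra.adjoin R
      {(Polynomial.X : Polynomial R) ^ p}] h = (0 :
        Polynomial R ⊗[Algebra.adjoin R {(Polynomial.X : Polynomial R) ^ p}] H) → h = 0) ∧
    -- … and surjectively onto `ker ∂_M`
    (∀ m, dM m = 0 → ∃ h : H, u h = 0 ∧ (1 : Polynomial R) ⊗ₜ h = m) ∧
    -- `h ↦ x^{p−1}⊗h` induces a well-defined injection on cokernels:
    -- `x^{p−1}⊗h ∈ im ∂_M ↔ h ∈ im u`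
    (∀ h : H, (∃ m, (Polynomial.X ^ (p - 1) : Polynomial R) ⊗ₜ[Algebra.adjoin R
        {(Polynomial.X : Polynomial R) ^ p}] h = dM m) ↔ (∃ h' : H, h = u h')) ∧
    -- which is surjective on cokernels
    (∀ m, ∃ h : H, ∃ m', m = (Polynomial.X ^ (p - 1) : Polynomial R) ⊗ₜ h + dM m') :=
  q_deRham_Higgs_cohomology_comparison_general p hp.pos R q
    (fun _ h0 hlt => isUnit_qInt_of_coprime hp.one_lt hpq
      (Nat.coprime_of_lt_prime h0.ne' hlt hp).symm)
    σ hσ D hD H u hu dM hleib hdM
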